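/- arXiv:1307.6236 — 7 statements merged into one kernel-verified Lean document; each statement's English description precedes it below -/
import Mathlib

section
/- Let B, k > 0 and let u, ξ : [0, ∞) → ℝ be differentiable functions satisfying the kinetic Gray–Scott system u'(t) = -(B+k) u(t) + u(t)² ξ(t) and ξ'(t) = -ξ(t) u(t)² + B(1 - ξ(t)) with u(0) ≥ 0 and ξ(0) ≥ 0. Then u(t) ≥ 0 and ξ(t) ≥ 0 for all t ≥ 0, and u(t) + ξ(t) ≤ max{u(0) + ξ(0), 1} for all t ≥ 0; in particular, the solution is uniformly bounded on [0, ∞). -/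
/-- Linear comparison: `f' ≥ a f`, `f 0 ≥ 0` imply `f ≥ 0` on `[0, ∞)`. -/
theorem nonneg_of_deriv_ge (f f' a : ℝ → ℝ) (ha : Continuous a)
    (hf : ∀ t : ℝ, 0 ≤ t → HasDerivAt f (f' t) t)
    (hle : ∀ t : ℝ, 0 ≤ t → a t * f t ≤ f' t) (h0 : 0 ≤ f 0) :
    ∀ t : ℝ, 0 ≤ t → 0 ≤ f t := by
  intro t ht
  have hA : ∀ s, HasDerivAt (fun x => ∫ y in (0:ℝ)..x, a y) (a s) s := fun s =>
    intervalIntegral.integral_hasDerivAt_right (ha.intervalIntegrable _ _)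
      ha.aestronglyMeasurable.stronglyMeasurableAtFilter ha.continuousAt
  set A : ℝ → ℝ := fun x => ∫ y in (0:ℝ)..x, a y with hAdef
  have hg : ∀ s : ℝ, 0 ≤ s → HasDerivAt (fun x => f x * Real.exp (-A x))
      (f' s * Real.exp (-A s) + f s * (Real.exp (-A s) * (-a s))) s := fun s hs =>
    (hf s hs).mul (hA s).neg.exp
  have hmono : MonotoneOn (fun x => f x * Real.exp (-A x)) (Set.Ici 0) := by
    apply monotoneOn_of_deriv_nonneg (convex_Ici 0)
    · intro s hs
      exact (hg s hs).continuousAt.continuousWithinAt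
    · intro s hs
      rw [interior_Ici] at hs
      exact (hg s (le_of_lt hs)).differentiableAt.differentiableWithinAt
    · intro s hs
      rw [interior_Ici] at hs
      rw [(hg s (le_of_lt hs)).deriv]
      have h1 := hle s (le_of_lt hs)
      have h2 := Real.exp_pos (-A s)
      nlinarith [mul_nonneg h2.le (sub_nonneg.2 h1)]
  have h := hmono (Set.mem_Ici.2 le_rfl) (Set.mem_Ici.2 ht) ht
  have h2 : 0 ≤ f t * Real.exp (-A t) :=
    le_trans (mul_nonneg h0 (Real.exp_pos _).le) h
  exact nonneg_of_mul_nonneg_left h2 (Real.exp_pos _)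

/-- Space-homogeneous (kinetic) Gray–Scott solutions are nonnegative, global and
uniformly bounded: `u(t) + ξ(t) ≤ max {u(0) + ξ(0), 1}`. -/
theorem stmt_2 (B k : ℝ) (hB : 0 < B) (hk : 0 < k)
    (u ξ : ℝ → ℝ)
    (hu : ∀ t : ℝ, 0 ≤ t → HasDerivAt u (-(B + k) * u t + (u t) ^ 2 * ξ t) t)
    (hξ : ∀ t : ℝ, 0 ≤ t → HasDerivAt ξ (-(ξ t) * (u t) ^ 2 + B * (1 - ξ t)) t)
    (hu0 : 0 ≤ u 0) (hξ0 : 0 ≤ ξ 0) :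
    ∀ t : ℝ, 0 ≤ t →
      0 ≤ u t ∧ 0 ≤ ξ t ∧ u t + ξ t ≤ max (u 0 + ξ 0) 1 := by
  have cu : Continuous (fun t : ℝ => u (max t 0)) := by
    rw [continuous_iff_continuousAt]
    intro t
    exact ContinuousAt.comp (f := fun t : ℝ => max t 0) (g := u)
      (hu (max t 0) (le_max_right _ _)).continuousAt (by fun_prop)
  have cξ : Continuous (fun t : ℝ => ξ (max t 0)) := by
    rw [continuous_iff_continuousAt]
    intro t
    exact ContinuousAt.comp (f := fun t : ℝ => max t 0) (g := ξ)
      (hξ (max t 0) (le_max_right _ _)).continuousAt (by fun_prop)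
  have pu := nonneg_of_deriv_ge u _ (fun t => -(B + k) + u (max t 0) * ξ (max t 0))
    (continuous_const.add (cu.mul cξ)) hu
    (by intro t ht; simp only [max_eq_left ht]; apply le_of_eq; ring) hu0
  have pξ := nonneg_of_deriv_ge ξ _ (fun t => -(u (max t 0)) ^ 2 - B)
    ((cu.pow 2).neg.sub continuous_const) hξ
    (by intro t ht; simp only [max_eq_left ht]; nlinarith) hξ0
  have pw := nonneg_of_deriv_ge (fun t => max (u 0 + ξ 0) 1 - (u t + ξ t)) _ (fun _ => -B)
    continuous_const (fun t ht => ((hu t ht).add (hξ t ht)).const_sub _)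
    (by
      intro t ht
      have h1 := mul_nonneg hk.le (pu t ht)
      have h2 := mul_nonneg hB.le (sub_nonneg.2 (le_max_right (u 0 + ξ 0) 1))
      nlinarith) (sub_nonneg.2 (le_max_left _ _))
  intro t ht
  exact ⟨pu t ht, pξ t ht, sub_nonneg.1 (pw t ht)⟩
end

section
/- Let a, d, κ₀ > 0, let Ω ⊂ ℝⁿ be a bounded measurable set with |Ω| = 1, and let (u, ξ) be a nonnegative solution of the carcinogenesis shadow system on [0, ∞) with u(·,t) integrable for each t. Assume additionally that the total mass M(t) := ∫_Ω u(x,t) dx + a ξ(t) is differentiable in t with M'(t) = ∫_Ω u_t(x,t) dx + a ξ'(t). Then M'(t) ≤ -min{1, d} M(t) + a κ₀ for all t ≥ 0, and consequently ∫_Ω u(x,t) dx + a ξ(t) ≤ max{∫_Ω u₀(x) dx + a ξ₀, a κ₀ / min{1, d}} for all t ≥ 0; in particular sup_{t>0} ∫_Ω u(x,t) dx < ∞. -/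
open MeasureTheory

/-- A nonnegative solution of the carcinogenesis shadow system
`u_t = (auξ/(1+uξ) - d)u`, `ξ' = -ξ - ξ∫_Ω u² dx + κ₀` on `[0, ∞)`. -/
structure IsCarcSolution {n : ℕ} (a d κ₀ : ℝ) (Ω : Set (EuclideanSpace ℝ (Fin n)))
    (u : EuclideanSpace ℝ (Fin n) → ℝ → ℝ) (ξ : ℝ → ℝ) : Prop where
  nonneg_u : ∀ x ∈ Ω, ∀ t : ℝ, 0 ≤ t → 0 ≤ u x t
  nonneg_ξ : ∀ t : ℝ, 0 ≤ t → 0 ≤ ξ t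
  deriv_u : ∀ x ∈ Ω, ∀ t : ℝ, 0 ≤ t →
    HasDerivAt (u x) ((a * u x t * ξ t / (1 + u x t * ξ t) - d) * u x t) t
  deriv_ξ : ∀ t : ℝ, 0 ≤ t →
    HasDerivAt ξ (-ξ t - ξ t * (∫ x in Ω, (u x t) ^ 2) + κ₀) t
  int_sq : ∀ t : ℝ, 0 ≤ t → IntegrableOn (fun x => (u x t) ^ 2) Ω volume
  cont_ξ : ContinuousOn ξ (Set.Ici 0)

/-- Boundedness of the total mass `M(t) = ∫_Ω u dx + aξ` for the carcinogenesis
shadow system. -/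
theorem stmt_12 {n : ℕ} (a d κ₀ : ℝ) (ha : 0 < a) (hd : 0 < d) (hκ₀ : 0 < κ₀)
    (Ω : Set (EuclideanSpace ℝ (Fin n)))
    (hΩbdd : Bornology.IsBounded Ω) (hΩmeas : MeasurableSet Ω)
    (hΩvol : volume Ω = 1)
    (u : EuclideanSpace ℝ (Fin n) → ℝ → ℝ) (ξ : ℝ → ℝ)
    (hsol : IsCarcSolution a d κ₀ Ω u ξ)
    (hint_u : ∀ t : ℝ, 0 ≤ t → IntegrableOn (fun x => u x t) Ω volume)
    (M : ℝ → ℝ) (hMdef : M = fun t => (∫ x in Ω, u x t) + a * ξ t)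
    (hMderiv : ∀ t : ℝ, 0 ≤ t →
      HasDerivAt M
        ((∫ x in Ω, (a * u x t * ξ t / (1 + u x t * ξ t) - d) * u x t) +
          a * (-ξ t - ξ t * (∫ x in Ω, (u x t) ^ 2) + κ₀)) t) :
    (∀ t : ℝ, 0 ≤ t → deriv M t ≤ -(min 1 d) * M t + a * κ₀) ∧
    (∀ t : ℝ, 0 ≤ t →
      (∫ x in Ω, u x t) + a * ξ t ≤
        max ((∫ x in Ω, u x 0) + a * ξ 0) (a * κ₀ / min 1 d)) ∧
    (∃ C : ℝ, ∀ t : ℝ, 0 < t → (∫ x in Ω, u x t) ≤ C) := by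
  have key : ∀ t : ℝ, 0 ≤ t → deriv M t ≤ -(min 1 d) * M t + a * κ₀ := by
    intro t ht
    rw [(hMderiv t ht).deriv]
    have hξ := hsol.nonneg_ξ t ht
    have hu := hint_u t ht
    have hsq := hsol.int_sq t ht
    have hR : IntegrableOn (fun x => a * ξ t * (u x t) ^ 2 - d * u x t) Ω volume :=
      (hsq.const_mul (a * ξ t)).sub (hu.const_mul d)
    have hpt : ∀ x ∈ Ω, (a * u x t * ξ t / (1 + u x t * ξ t) - d) * u x t
        ≤ a * ξ t * (u x t) ^ 2 - d * u x t := by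
      intro x hx
      have h0 := hsol.nonneg_u x hx t ht
      have h1 : a * u x t * ξ t / (1 + u x t * ξ t) ≤ a * u x t * ξ t :=
        div_le_self (by positivity) (by nlinarith [mul_nonneg h0 hξ])
      nlinarith [mul_le_mul_of_nonneg_right h1 h0]
    have hL : IntegrableOn (fun x => (a * u x t * ξ t / (1 + u x t * ξ t) - d) * u x t)
        Ω volume := by
      have hm : AEMeasurable (fun x => u x t) (volume.restrict Ω) :=
        hu.aestronglyMeasurable.aemeasurable
      refine Integrable.mono' ((hsq.const_mul (a * ξ t)).add (hu.const_mul d)) ?_ ?_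
      · apply AEMeasurable.aestronglyMeasurable
        fun_prop
      · refine (ae_restrict_iff' hΩmeas).2 (Filter.Eventually.of_forall ?_)
        intro x hx
        have h0 := hsol.nonneg_u x hx t ht
        have h2 := hpt x hx
        have h3 : 0 ≤ a * u x t * ξ t / (1 + u x t * ξ t) * u x t := by positivity
        have h4 : 0 ≤ a * ξ t * (u x t) ^ 2 := by positivity
        have h5 : 0 ≤ d * u x t := by positivity
        simp only [Real.norm_eq_abs, Pi.add_apply]
        rw [abs_le]
        constructor <;> linarith
    have hle := setIntegral_mono_on hL hR hΩmeas hpt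
    have heq : ∫ x in Ω, (a * ξ t * (u x t) ^ 2 - d * u x t)
        = a * ξ t * (∫ x in Ω, (u x t) ^ 2) - d * ∫ x in Ω, u x t := by
      rw [integral_sub (hsq.const_mul (a * ξ t)) (hu.const_mul d), integral_const_mul,
        integral_const_mul]
    rw [heq] at hle
    have hI : 0 ≤ ∫ x in Ω, u x t :=
      setIntegral_nonneg hΩmeas fun x hx => hsol.nonneg_u x hx t ht
    have e1 := mul_le_mul_of_nonneg_right (min_le_right 1 d) hI
    have e2 := mul_le_mul_of_nonneg_right (min_le_left 1 d) (mul_nonneg ha.le hξ)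
    have hMt : M t = (∫ x in Ω, u x t) + a * ξ t := by rw [hMdef]
    rw [hMt]
    linarith
  have hm : 0 < min 1 d := lt_min one_pos hd
  have bound : ∀ t : ℝ, 0 ≤ t → M t ≤ max (M 0) (a * κ₀ / min 1 d) := by
    intro t ht
    generalize min 1 d = m at *
    have hK : m * (a * κ₀ / m) = a * κ₀ := by field_simp
    generalize a * κ₀ / m = K at *
    have hder : ∀ s : ℝ, 0 ≤ s → HasDerivAt (fun s => (M s - K) * Real.exp (m * s))
        (deriv M s * Real.exp (m * s) + (M s - K) * (Real.exp (m * s) * m)) s := by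
      intro s hs
      have h1 := (hMderiv s hs).differentiableAt.hasDerivAt.sub_const K
      have h2 : HasDerivAt (fun s : ℝ => m * s) m s := by
        simpa using (hasDerivAt_id s).const_mul m
      exact h1.mul h2.exp
    have hanti : AntitoneOn (fun s => (M s - K) * Real.exp (m * s)) (Set.Ici 0) := by
      apply antitoneOn_of_deriv_nonpos (convex_Ici 0)
      · exact fun s hs => (hder s hs).continuousAt.continuousWithinAt
      · intro s hs
        rw [interior_Ici] at hs
        exact (hder s (le_of_lt hs)).differentiableAt.differentiableWithinAt
      · intro s hs
        rw [interior_Ici] at hs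
        rw [(hder s (le_of_lt hs)).deriv]
        have := mul_le_mul_of_nonneg_right (key s (le_of_lt hs)) (Real.exp_pos (m * s)).le
        rw [← hK] at this
        linarith
    have h := hanti (Set.mem_Ici.2 le_rfl) (Set.mem_Ici.2 ht) ht
    simp only [mul_zero, Real.exp_zero, mul_one] at h
    by_contra hc
    rw [not_le, max_lt_iff] at hc
    have he : 1 ≤ Real.exp (m * t) := Real.one_le_exp (by positivity)
    nlinarith [mul_le_mul_of_nonneg_left he (sub_nonneg.2 hc.2.le)]
  have bound2 : ∀ t : ℝ, 0 ≤ t → (∫ x in Ω, u x t) + a * ξ t ≤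
        max ((∫ x in Ω, u x 0) + a * ξ 0) (a * κ₀ / min 1 d) := by
    intro t ht
    have := bound t ht
    rw [hMdef] at this
    exact this
  refine ⟨key, bound2, max ((∫ x in Ω, u x 0) + a * ξ 0) (a * κ₀ / min 1 d), fun t ht => ?_⟩
  · have := bound2 t ht.le
    have h2 := mul_nonneg ha.le (hsol.nonneg_ξ t ht.le)
    linarith
end

section
/- Let a, d, κ₀ > 0 and let u, ξ : [0, ∞) → ℝ be differentiable functions with u(0) > 0, ξ(0) > 0, u(t) ≥ 0, ξ(t) ≥ 0, satisfying the kinetic carcinogenesis system u'(t) = (a u(t)ξ(t)/(1 + u(t)ξ(t)) - d) u(t) and ξ'(t) = -ξ(t) - ξ(t) u(t)² + κ₀ for all t ≥ 0. Then u(t) + a ξ(t) ≤ max{u(0) + a ξ(0), a κ₀ / min{1, d}} for all t ≥ 0; in particular, the solution is uniformly bounded on [0, ∞). -/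
/-- Space-homogeneous (kinetic) solutions of the carcinogenesis system are
uniformly bounded: `u(t) + aξ(t) ≤ max {u(0) + aξ(0), aκ₀/min{1,d}}`. -/
theorem stmt_13 (a d κ₀ : ℝ) (ha : 0 < a) (hd : 0 < d) (hκ₀ : 0 < κ₀)
    (u ξ : ℝ → ℝ) (hu0 : 0 < u 0) (hξ0 : 0 < ξ 0)
    (hunn : ∀ t : ℝ, 0 ≤ t → 0 ≤ u t) (hξnn : ∀ t : ℝ, 0 ≤ t → 0 ≤ ξ t)
    (hu : ∀ t : ℝ, 0 ≤ t →
      HasDerivAt u ((a * u t * ξ t / (1 + u t * ξ t) - d) * u t) t)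
    (hξ : ∀ t : ℝ, 0 ≤ t →
      HasDerivAt ξ (-ξ t - ξ t * (u t) ^ 2 + κ₀) t) :
    ∀ t : ℝ, 0 ≤ t →
      u t + a * ξ t ≤ max (u 0 + a * ξ 0) (a * κ₀ / min 1 d) := by
  have hm : 0 < min 1 d := lt_min one_pos hd
  have hm1 : min 1 d ≤ 1 := min_le_left _ _
  have hmd : min 1 d ≤ d := min_le_right _ _
  have hM0 : u 0 + a * ξ 0 ≤ max (u 0 + a * ξ 0) (a * κ₀ / min 1 d) := le_max_left _ _
  have hM1 : a * κ₀ / min 1 d ≤ max (u 0 + a * ξ 0) (a * κ₀ / min 1 d) := le_max_right _ _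
  rw [div_le_iff₀ hm] at hM1
  generalize max (u 0 + a * ξ 0) (a * κ₀ / min 1 d) = M at *
  generalize min 1 d = m at *
  have hg : ∀ t : ℝ, 0 ≤ t → HasDerivAt (fun t => (u t + a * ξ t - M) * Real.exp (m * t))
      ((((a * u t * ξ t / (1 + u t * ξ t) - d) * u t
        + a * (-ξ t - ξ t * (u t) ^ 2 + κ₀)) + m * (u t + a * ξ t - M))
        * Real.exp (m * t)) t := by
    intro t ht
    have h1 := ((hu t ht).add ((hξ t ht).const_mul a)).sub_const M
    have h2 := ((hasDerivAt_id t).const_mul m).exp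
    refine (h1.mul h2).congr_deriv ?_
    simp only [id, Pi.add_apply]
    ring
  have hanti : AntitoneOn (fun t => (u t + a * ξ t - M) * Real.exp (m * t)) (Set.Ici 0) := by
    apply antitoneOn_of_deriv_nonpos (convex_Ici 0)
    · intro t ht
      exact (hg t ht).continuousAt.continuousWithinAt
    · intro t ht
      exact (hg t (interior_subset ht)).differentiableAt.differentiableWithinAt
    · intro t ht
      have ht : 0 ≤ t := interior_subset ht
      rw [(hg t ht).deriv]
      apply mul_nonpos_of_nonpos_of_nonneg _ (Real.exp_pos _).le
      have hu' := hunn t ht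
      have hx' := hξnn t ht
      have hp : 0 ≤ u t * ξ t := mul_nonneg hu' hx'
      have h1 : a * u t * ξ t / (1 + u t * ξ t) ≤ a * u t * ξ t := by
        apply div_le_self (by positivity)
        linarith
      have h2 := mul_le_mul_of_nonneg_right h1 hu'
      have h3 := mul_le_mul_of_nonneg_right hmd hu'
      have h4 := mul_le_mul_of_nonneg_right hm1 (mul_nonneg ha.le hx')
      linarith
  intro t ht
  have h := hanti (Set.mem_Ici.2 le_rfl) (Set.mem_Ici.2 ht) ht
  simp only [mul_zero, Real.exp_zero, mul_one] at h
  by_contra hc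
  have : 0 < (u t + a * ξ t - M) * Real.exp (m * t) :=
    mul_pos (by linarith) (Real.exp_pos _)
  linarith
end

section
/- Let a, d, κ₀ > 0 satisfy 2(a - d) ≥ 1 and κ₀ ≥ 4a, and let λ satisfy 1/2 ≤ λ ≤ 1 - 2a/κ₀. Let Ω ⊂ ℝⁿ be a bounded measurable set with |Ω| = 1, and let (u, ξ) be a nonnegative solution of the carcinogenesis shadow system on [0, ∞) with u(·,0) = u₀ and ξ(0) = ξ₀, where ξ(t) > 0 for all t ≥ 0. Assume additionally that t ↦ ∫_Ω u(x,t)² dx is differentiable with derivative ∫_Ω 2 u(x,t) u_t(x,t) dx. If ξ₀ ∫_Ω u₀(x)² dx > λ κ₀ and 0 < ξ₀ ≤ (1 - λ) κ₀, then for all t ≥ 0: ξ(t) ∫_Ω u(x,t)² dx > λ κ₀ and 0 < ξ(t) ≤ (1 - λ) κ₀. -/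
open MeasureTheory

/-- Left-derivative test. -/
theorem carc_left_deriv {f : ℝ → ℝ} {f' s : ℝ} (hs : 0 < s) (hf : HasDerivAt f f' s)
    (h : ∀ t, 0 ≤ t → t < s → f s < f t) : f' ≤ 0 := by
  have h1 := hasDerivAt_iff_tendsto_slope.1 hf
  have h2 : Filter.Tendsto (slope f s) (nhdsWithin s (Set.Iio s)) (nhds f') :=
    h1.mono_left (nhdsWithin_mono _ (fun x hx => ne_of_lt hx))
  refine le_of_tendsto h2 ?_
  have h3 : Set.Ioo 0 s ∈ nhdsWithin s (Set.Iio s) := Ioo_mem_nhdsLT hs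
  filter_upwards [h3] with t ht
  rw [slope_def_field]
  have := h t ht.1.le ht.2
  exact div_nonpos_of_nonneg_of_nonpos (by linarith) (by linarith [ht.2])

/-- Gronwall-type bound. -/
theorem carc_gron {f f' : ℝ → ℝ} {M s : ℝ} (hs : 0 ≤ s)
    (hf : ∀ t, 0 ≤ t → HasDerivAt f (f' t) t)
    (h : ∀ t, 0 ≤ t → t ≤ s → f' t ≤ -f t + M) (h0 : f 0 ≤ M) : f s ≤ M := by
  have hd : ∀ t, 0 ≤ t → HasDerivAt (fun t => (f t - M) * Real.exp t)
      (f' t * Real.exp t + (f t - M) * Real.exp t) t := fun t ht =>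
    ((hf t ht).sub_const M).mul (Real.hasDerivAt_exp t)
  have hanti : AntitoneOn (fun t => (f t - M) * Real.exp t) (Set.Icc 0 s) := by
    refine antitoneOn_of_hasDerivWithinAt_nonpos (convex_Icc 0 s)
      (fun t ht => (hd t ht.1).continuousAt.continuousWithinAt)
      (fun t ht => (hd t (interior_subset ht).1).hasDerivWithinAt) ?_
    intro t ht
    have ht' := interior_subset ht
    have := h t ht'.1 ht'.2
    have he := Real.exp_pos t
    nlinarith
  have := hanti (Set.left_mem_Icc.2 hs) (Set.right_mem_Icc.2 hs) hs
  simp only [Real.exp_zero, mul_one] at this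
  have he := Real.exp_pos s
  by_contra hc
  push Not at hc
  have := mul_pos (sub_pos.2 hc) he
  linarith

/-- Key integral estimate. -/
theorem carc_int {α : Type*} [MeasurableSpace α] (μ : Measure α) [IsProbabilityMeasure μ]
    (a d z : ℝ) (hz : 0 < z) (ha : 0 < a) (v : α → ℝ) (hv : ∀ᵐ x ∂μ, 0 ≤ v x)
    (hi : Integrable v μ) (hi2 : Integrable (fun x => (v x) ^ 2) μ) :
    2 * (a - d) * (z * ∫ x, (v x) ^ 2 ∂μ) - a * ((∫ x, (v x) ^ 2 ∂μ) + 1) <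
      z * ∫ x, 2 * v x * ((a * v x * z / (1 + v x * z) - d) * v x) ∂μ := by
  have hm : AEMeasurable v μ := hi.aemeasurable
  have hF : Integrable (fun x => 2 * v x * ((a * v x * z / (1 + v x * z) - d) * v x)) μ := by
    refine Integrable.mono' (hi2.const_mul (2 * (a + |d|))) ?_ ?_
    · apply AEMeasurable.aestronglyMeasurable
      fun_prop
    · filter_upwards [hv] with x hx
      have hp : 0 ≤ v x * z := by positivity
      have h1 : 0 ≤ a * v x * z / (1 + v x * z) := by positivity
      have h2 : a * v x * z / (1 + v x * z) ≤ a := by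
        rw [div_le_iff₀ (by positivity)]; nlinarith
      have h3 : |a * v x * z / (1 + v x * z) - d| ≤ a + |d| := by
        refine (abs_sub _ _).trans ?_
        rw [abs_of_nonneg h1]; linarith
      have : 2 * v x * ((a * v x * z / (1 + v x * z) - d) * v x)
        = 2 * (v x)^2 * (a * v x * z / (1 + v x * z) - d) := by ring
      rw [this, Real.norm_eq_abs, abs_mul, abs_of_nonneg (by positivity)]
      nlinarith [sq_nonneg (v x)]
  have hG : Integrable (fun x => 2 * (a - d) * z * (v x) ^ 2 - a * ((v x) ^ 2 + 1)) μ :=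
    (hi2.const_mul _).sub ((hi2.add (integrable_const 1)).const_mul a)
  have hi3 : Integrable (fun x => (v x) ^ 2 + 1) μ := hi2.add (integrable_const 1)
  have hGe : ∫ x, (2 * (a - d) * z * (v x) ^ 2 - a * ((v x) ^ 2 + 1)) ∂μ
      = 2 * (a - d) * (z * ∫ x, (v x) ^ 2 ∂μ) - a * ((∫ x, (v x) ^ 2 ∂μ) + 1) := by
    rw [integral_sub (hi2.const_mul _) (hi3.const_mul a),
      integral_const_mul, integral_const_mul, integral_add hi2 (integrable_const 1)]
    simp
    ring
  rw [← hGe, ← integral_const_mul, ← sub_pos, ← integral_sub (hF.const_mul z) hG]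
  have hpos : ∀ᵐ x ∂μ, 0 < z * (2 * v x * ((a * v x * z / (1 + v x * z) - d) * v x)) -
      (2 * (a - d) * z * (v x) ^ 2 - a * ((v x) ^ 2 + 1)) := by
    filter_upwards [hv] with x hx
    have hp : 0 < 1 + v x * z := by positivity
    have : z * (2 * v x * ((a * v x * z / (1 + v x * z) - d) * v x)) -
      (2 * (a - d) * z * (v x) ^ 2 - a * ((v x) ^ 2 + 1))
      = a * ((v x - 1) ^ 2 + v x * z * (v x - 1) ^ 2 + 2 * v x) / (1 + v x * z) := by
      field_simp
      ring
    rw [this]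
    refine div_pos (mul_pos ha ?_) hp
    rcases hx.eq_or_lt with h | h
    · rw [← h]; norm_num
    · positivity
  rw [integral_pos_iff_support_of_nonneg_ae (hpos.mono fun x hx => hx.le)
    ((hF.const_mul z).sub hG)]
  rw [pos_iff_ne_zero]
  intro h0
  have h1 : ∀ᵐ x ∂μ, x ∉ Function.support (fun x =>
      z * (2 * v x * ((a * v x * z / (1 + v x * z) - d) * v x)) -
      (2 * (a - d) * z * (v x) ^ 2 - a * ((v x) ^ 2 + 1))) := measure_eq_zero_iff_ae_notMem.1 h0
  obtain ⟨x, hx1, hx2⟩ := (h1.and hpos).exists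
  exact hx1 hx2.ne'

/-- The invariant region `ξ∫_Ω u² dx > λκ₀`, `0 < ξ ≤ (1-λ)κ₀` is preserved by
the flow of the carcinogenesis shadow system. -/
theorem stmt_14 {n : ℕ} (a d κ₀ lam : ℝ) (ha : 0 < a) (hd : 0 < d) (hκ₀ : 0 < κ₀)
    (had : 1 ≤ 2 * (a - d)) (hκa : 4 * a ≤ κ₀)
    (hlam₁ : 1 / 2 ≤ lam) (hlam₂ : lam ≤ 1 - 2 * a / κ₀)
    (Ω : Set (EuclideanSpace ℝ (Fin n)))
    (hΩbdd : Bornology.IsBounded Ω) (hΩmeas : MeasurableSet Ω)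
    (hΩvol : volume Ω = 1)
    (u : EuclideanSpace ℝ (Fin n) → ℝ → ℝ) (ξ : ℝ → ℝ)
    (hsol : IsCarcSolution a d κ₀ Ω u ξ)
    (hξpos : ∀ t : ℝ, 0 ≤ t → 0 < ξ t)
    (hint_u : ∀ t : ℝ, 0 ≤ t → IntegrableOn (fun x => u x t) Ω volume)
    (hL2deriv : ∀ t : ℝ, 0 ≤ t →
      HasDerivAt (fun s => ∫ x in Ω, (u x s) ^ 2)
        (∫ x in Ω, 2 * u x t * ((a * u x t * ξ t / (1 + u x t * ξ t) - d) * u x t)) t)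
    (u₀ : EuclideanSpace ℝ (Fin n) → ℝ) (hu0 : ∀ x ∈ Ω, u x 0 = u₀ x)
    (ξ₀ : ℝ) (hξ0 : ξ 0 = ξ₀)
    (hini₁ : lam * κ₀ < ξ₀ * ∫ x in Ω, (u₀ x) ^ 2)
    (hini₂ : 0 < ξ₀ ∧ ξ₀ ≤ (1 - lam) * κ₀) :
    ∀ t : ℝ, 0 ≤ t →
      lam * κ₀ < ξ t * ∫ x in Ω, (u x t) ^ 2 ∧
      0 < ξ t ∧ ξ t ≤ (1 - lam) * κ₀ := by
  have hprob : IsProbabilityMeasure (volume.restrict Ω) := ⟨by simp [hΩvol]⟩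
  have hI0 : ∫ x in Ω, (u x 0) ^ 2 = ∫ x in Ω, (u₀ x) ^ 2 :=
    setIntegral_congr_fun hΩmeas (fun x hx => by simp only [hu0 x hx])
  have hl2 : lam * κ₀ ≤ κ₀ - 2 * a := by
    have := mul_le_mul_of_nonneg_right hlam₂ hκ₀.le
    have e : (1 - 2 * a / κ₀) * κ₀ = κ₀ - 2 * a := by field_simp
    linarith
  have hkey : ∀ t, 0 ≤ t → 2 * (a - d) * (ξ t * ∫ x in Ω, (u x t) ^ 2)
      - a * ((∫ x in Ω, (u x t) ^ 2) + 1) <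
      ξ t * ∫ x in Ω, 2 * u x t * ((a * u x t * ξ t / (1 + u x t * ξ t) - d) * u x t) :=
    fun t ht => carc_int _ a d (ξ t) (hξpos t ht) ha (fun x => u x t)
      ((ae_restrict_iff' hΩmeas).2 (Filter.Eventually.of_forall
        fun x hx => hsol.nonneg_u x hx t ht)) (hint_u t ht) (hsol.int_sq t ht)
  have hdξ := hsol.deriv_ξ
  rw [← hI0, ← hξ0] at hini₁
  rw [← hξ0] at hini₂
  clear hI0
  generalize hI : (fun s => ∫ x in Ω, (u x s) ^ 2) = I at *
  have hI' : ∀ t, ∫ x in Ω, (u x t) ^ 2 = I t := fun t => congrFun hI t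
  simp only [hI'] at *
  have hdy : ∀ t, 0 ≤ t → HasDerivAt (fun t => ξ t * I t) _ t :=
    fun t ht => (hdξ t ht).mul (hL2deriv t ht)
  have hbound : ∀ s, 0 ≤ s → (∀ t, 0 ≤ t → t ≤ s → lam * κ₀ ≤ ξ t * I t) →
      ξ s ≤ (1 - lam) * κ₀ := by
    intro s hs h
    refine carc_gron hs hdξ (fun t ht hts => ?_) hini₂.2
    linarith [h t ht hts]
  have hmain : ∀ t, 0 ≤ t → lam * κ₀ < ξ t * I t := by
    by_contra hc
    push Not at hc
    obtain ⟨t₁, ht₁, hle₁⟩ := hc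
    have hcont : ContinuousOn (fun t => ξ t * I t) (Set.Icc 0 t₁) :=
      fun t ht => (hdy t ht.1).continuousAt.continuousWithinAt
    have hcl : IsClosed (Set.Icc 0 t₁ ∩ (fun t => ξ t * I t) ⁻¹' Set.Iic (lam * κ₀)) :=
      hcont.preimage_isClosed_of_isClosed isClosed_Icc isClosed_Iic
    have hcomp := isCompact_Icc.of_isClosed_subset hcl Set.inter_subset_left
    obtain ⟨s, ⟨hs1, hs2⟩, hleast⟩ := hcomp.exists_isLeast ⟨t₁, ⟨ht₁, le_rfl⟩, hle₁⟩
    simp only [Set.mem_preimage, Set.mem_Iic] at hs2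
    have hbefore : ∀ t, 0 ≤ t → t < s → lam * κ₀ < ξ t * I t := by
      intro t ht hts
      by_contra hc
      push Not at hc
      exact absurd (hleast ⟨⟨ht, hts.le.trans hs1.2⟩, hc⟩) (not_le.2 hts)
    have hspos : 0 < s := by
      rcases hs1.1.eq_or_lt with h | h
      · rw [← h] at hs2; linarith
      · exact h
    have hge : lam * κ₀ ≤ ξ s * I s := by
      have hten : Filter.Tendsto (fun t => ξ t * I t) (nhdsWithin s (Set.Iio s))
          (nhds (ξ s * I s)) := (hdy s hs1.1).continuousAt.tendsto.mono_left nhdsWithin_le_nhds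
      refine ge_of_tendsto hten ?_
      filter_upwards [Ioo_mem_nhdsLT hspos] with t ht
      exact (hbefore t ht.1.le ht.2).le
    have heq : ξ s * I s = lam * κ₀ := le_antisymm hs2 hge
    have hξs : ξ s ≤ (1 - lam) * κ₀ := hbound s hs1.1 (fun t ht hts => by
      rcases hts.eq_or_lt with h | h
      · rw [h]; exact hge
      · exact (hbefore t ht h).le)
    have hder := carc_left_deriv hspos (hdy s hs1.1) (fun t ht hts => by
      show ξ s * I s < ξ t * I t
      rw [heq]; exact hbefore t ht hts)
    have hk := hkey s hs1.1
    have hx := hξpos s hs1.1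
    have hI1 : 1 ≤ I s := by
      by_contra hc
      push Not at hc
      have h1 : ξ s * I s < ξ s := by nlinarith
      nlinarith
    have e1 : (-ξ s - ξ s * I s + κ₀) * I s = -(lam * κ₀) - lam * κ₀ * I s + κ₀ * I s := by
      rw [← heq]; ring
    have e2 : 0 ≤ (κ₀ - 2 * a - lam * κ₀) * I s := mul_nonneg (by linarith) (by linarith)
    have e3 : lam * κ₀ ≤ 2 * (a - d) * (ξ s * I s) := by
      rw [heq]
      have : 0 < lam * κ₀ := by positivity
      nlinarith
    have e4 : a * (I s + 1) ≤ 2 * a * I s := by nlinarith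
    linarith
  exact fun t ht => ⟨hmain t ht, hξpos t ht, hbound t ht fun r hr _ => (hmain r hr).le⟩
end

section
/- Let a, d > 0, T ∈ (0, ∞], and let ξ : [0, T) → [0, ∞) be continuous. Suppose u₁, u₂ : [0, T) → (0, ∞) are differentiable and each solves the equation u'(t) = (a u(t)ξ(t)/(1 + u(t)ξ(t)) - d) u(t) on [0, T). If u₁(0) ≤ u₂(0), then u₁(t)/u₂(t) ≤ u₁(0)/u₂(0) for all t ∈ [0, T); in particular u₁(t) ≤ u₂(t) for all t, and if u₁(0) < u₂(0) then u₁(t) < u₂(t) for all t ∈ [0, T). Moreover, the ratio w(t) = u₁(t)/u₂(t) satisfies w'(t) = -a w(t) · u₂(t)ξ(t)(1 - w(t)) / ((1 + u₁(t)ξ(t))(1 + u₂(t)ξ(t))). -/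
open scoped ENNReal

theorem mono_aux (f f' : ℝ → ℝ) (t : ℝ) (ht : 0 ≤ t)
    (hf : ∀ s, 0 ≤ s → s ≤ t → HasDerivAt f (f' s) s)
    (hp : ∀ s, 0 ≤ s → s ≤ t → 0 ≤ f' s) : f 0 ≤ f t := by
  have hm : MonotoneOn f (Set.Icc 0 t) := by
    apply monotoneOn_of_deriv_nonneg (convex_Icc 0 t)
    · intro s hs
      exact (hf s hs.1 hs.2).continuousAt.continuousWithinAt
    · intro s hs
      have hs := interior_subset hs
      exact (hf s hs.1 hs.2).differentiableAt.differentiableWithinAt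
    · intro s hs
      have hs := interior_subset hs
      rw [(hf s hs.1 hs.2).deriv]
      exact hp s hs.1 hs.2
  exact hm ⟨le_refl _, ht⟩ ⟨ht, le_refl _⟩ ht

theorem lin_aux (z k : ℝ → ℝ) (a t : ℝ) (ht : 0 ≤ t)
    (hz : ∀ s, 0 ≤ s → s ≤ t → HasDerivAt z (k s * z s) s)
    (hk : ∀ s, 0 ≤ s → s ≤ t → 0 ≤ k s ∧ k s ≤ a) :
    (z 0 = 0 → z t = 0) ∧ (0 < z 0 → 0 < z t) := by
  have hd : ∀ c s, 0 ≤ s → s ≤ t → HasDerivAt (fun s => z s ^ 2 * Real.exp (c * s))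
      ((2 * k s + c) * (z s ^ 2 * Real.exp (c * s))) s := by
    intro c s h1 h2
    have e : HasDerivAt (fun s => Real.exp (c * s)) (Real.exp (c * s) * (c * 1)) s :=
      ((hasDerivAt_id' s).const_mul c).exp
    refine (((hz s h1 h2).pow 2).mul e).congr_deriv ?_
    simp only [Pi.pow_apply]
    push_cast
    ring
  constructor
  · intro h
    have := mono_aux (fun s => -(z s ^ 2 * Real.exp (-(2 * a) * s))) _ t ht
      (fun s h1 h2 => (hd (-(2 * a)) s h1 h2).neg) (by
        intro s h1 h2
        have := (hk s h1 h2).2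
        have p : 0 ≤ z s ^ 2 * Real.exp (-(2 * a) * s) := by positivity
        nlinarith)
    simp only [h] at this
    have e := Real.exp_pos (-(2 * a) * t)
    by_contra hne
    have : 0 < z t ^ 2 * Real.exp (-(2 * a) * t) := by positivity
    norm_num at *
    linarith
  · intro h
    have hne : ∀ s, 0 ≤ s → s ≤ t → z s ≠ 0 := by
      intro r hr hrt h0
      have := mono_aux (fun s => z s ^ 2 * Real.exp (0 * s)) _ r hr
        (fun s h1 h2 => hd 0 s h1 (h2.trans hrt)) (by
          intro s h1 h2
          have := (hk s h1 (h2.trans hrt)).1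
          positivity)
      simp [h0] at this
      nlinarith
    by_contra hc
    have hcont : ContinuousOn z (Set.Icc 0 t) := fun s hs =>
      (hz s hs.1 hs.2).continuousAt.continuousWithinAt
    obtain ⟨s, hs, h0⟩ := intermediate_value_Icc' ht hcont ⟨not_lt.mp hc, h.le⟩
    exact hne s hs.1 hs.2 h0

/-- Order preservation and ratio monotonicity for the scalar ODE
`u' = (auξ(t)/(1+uξ(t)) - d)u` with nonnegative coefficient `ξ`. -/
theorem stmt_16 (a d : ℝ) (ha : 0 < a) (hd : 0 < d)
    (T : ℝ≥0∞) (hT : 0 < T)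
    (ξ : ℝ → ℝ)
    (hξcont : ContinuousOn ξ {t : ℝ | 0 ≤ t ∧ ENNReal.ofReal t < T})
    (hξnn : ∀ t : ℝ, 0 ≤ t → ENNReal.ofReal t < T → 0 ≤ ξ t)
    (u₁ u₂ : ℝ → ℝ)
    (hu₁pos : ∀ t : ℝ, 0 ≤ t → ENNReal.ofReal t < T → 0 < u₁ t)
    (hu₂pos : ∀ t : ℝ, 0 ≤ t → ENNReal.ofReal t < T → 0 < u₂ t)
    (hu₁ : ∀ t : ℝ, 0 ≤ t → ENNReal.ofReal t < T →
      HasDerivAt u₁ ((a * u₁ t * ξ t / (1 + u₁ t * ξ t) - d) * u₁ t) t)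
    (hu₂ : ∀ t : ℝ, 0 ≤ t → ENNReal.ofReal t < T →
      HasDerivAt u₂ ((a * u₂ t * ξ t / (1 + u₂ t * ξ t) - d) * u₂ t) t)
    (h0 : u₁ 0 ≤ u₂ 0) :
    (∀ t : ℝ, 0 ≤ t → ENNReal.ofReal t < T → u₁ t / u₂ t ≤ u₁ 0 / u₂ 0) ∧
    (∀ t : ℝ, 0 ≤ t → ENNReal.ofReal t < T → u₁ t ≤ u₂ t) ∧
    (u₁ 0 < u₂ 0 → ∀ t : ℝ, 0 ≤ t → ENNReal.ofReal t < T → u₁ t < u₂ t) ∧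
    (∀ t : ℝ, 0 ≤ t → ENNReal.ofReal t < T →
      HasDerivAt (fun s => u₁ s / u₂ s)
        (-(a * (u₁ t / u₂ t) * (u₂ t * ξ t * (1 - u₁ t / u₂ t)) /
          ((1 + u₁ t * ξ t) * (1 + u₂ t * ξ t)))) t) := by
  have hlt : ∀ {s t : ℝ}, s ≤ t → ENNReal.ofReal t < T → ENNReal.ofReal s < T :=
    fun h1 h2 => (ENNReal.ofReal_le_ofReal h1).trans_lt h2
  have hw : ∀ t : ℝ, 0 ≤ t → ENNReal.ofReal t < T →
      HasDerivAt (fun s => u₁ s / u₂ s)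
        (-(a * (u₁ t / u₂ t) * (u₂ t * ξ t * (1 - u₁ t / u₂ t)) /
          ((1 + u₁ t * ξ t) * (1 + u₂ t * ξ t)))) t := by
    intro t h1 h2
    have p1 := hu₁pos t h1 h2
    have p2 := hu₂pos t h1 h2
    have p3 := hξnn t h1 h2
    refine ((hu₁ t h1 h2).div (hu₂ t h1 h2) p2.ne').congr_deriv ?_
    have q1 : 1 + u₁ t * ξ t ≠ 0 := by positivity
    have q2 : 1 + u₂ t * ξ t ≠ 0 := by positivity
    field_simp
    ring
  have h00 : ∀ t : ℝ, 0 ≤ t → ENNReal.ofReal t < T → 0 < u₂ 0 :=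
    fun t h1 h2 => hu₂pos 0 le_rfl (hlt h1 h2)
  have key : ∀ t : ℝ, 0 ≤ t → ENNReal.ofReal t < T →
      (1 - u₁ 0 / u₂ 0 = 0 → 1 - u₁ t / u₂ t = 0) ∧
      (0 < 1 - u₁ 0 / u₂ 0 → 0 < 1 - u₁ t / u₂ t) := by
    intro t h1 h2
    refine lin_aux (fun s => 1 - u₁ s / u₂ s)
      (fun s => a * (u₁ s * ξ s) / ((1 + u₁ s * ξ s) * (1 + u₂ s * ξ s))) a t h1 ?_ ?_
    · intro s s1 s2
      have p2 := hu₂pos s s1 (hlt s2 h2)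
      refine ((hw s s1 (hlt s2 h2)).const_sub 1).congr_deriv ?_
      field_simp
    · intro s s1 s2
      have p1 := hu₁pos s s1 (hlt s2 h2)
      have p2 := hu₂pos s s1 (hlt s2 h2)
      have p3 := hξnn s s1 (hlt s2 h2)
      have x1 : 0 ≤ u₁ s * ξ s := by positivity
      have x2 : 0 ≤ u₂ s * ξ s := by positivity
      refine ⟨by positivity, ?_⟩
      rw [div_le_iff₀ (by positivity)]
      apply mul_le_mul_of_nonneg_left _ ha.le
      nlinarith [mul_nonneg x1 x2]
  have hst : u₁ 0 < u₂ 0 → ∀ t : ℝ, 0 ≤ t → ENNReal.ofReal t < T → u₁ t < u₂ t := by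
    intro h t h1 h2
    have := (key t h1 h2).2 (by
      rw [sub_pos, div_lt_one (h00 t h1 h2)]; exact h)
    rwa [sub_pos, div_lt_one (hu₂pos t h1 h2)] at this
  have hle : ∀ t : ℝ, 0 ≤ t → ENNReal.ofReal t < T → u₁ t ≤ u₂ t := by
    intro t h1 h2
    rcases h0.lt_or_eq with h | h
    · exact (hst h t h1 h2).le
    · have := (key t h1 h2).1 (by rw [h, div_self (h00 t h1 h2).ne', sub_self])
      rw [← div_le_one (hu₂pos t h1 h2)]
      linarith
  refine ⟨?_, hle, hst, hw⟩
  intro t h1 h2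
  have := mono_aux (fun s => -(u₁ s / u₂ s)) _ t h1
    (fun s s1 s2 => (hw s s1 (hlt s2 h2)).neg) (by
      intro s s1 s2
      have p1 := hu₁pos s s1 (hlt s2 h2)
      have p2 := hu₂pos s s1 (hlt s2 h2)
      have p3 := hξnn s s1 (hlt s2 h2)
      have p4 : 0 ≤ 1 - u₁ s / u₂ s := by
        rw [sub_nonneg, div_le_one p2]
        exact hle s s1 (hlt s2 h2)
      rw [neg_neg]
      positivity)
  simpa using this
end

section
/- Let a, d, κ₀ > 0, let Ω ⊂ ℝⁿ be a bounded measurable set with |Ω| = 1, and let (u, ξ) be a nonnegative solution of the carcinogenesis shadow system on [0, ∞) with ξ(0) = ξ₀ > 0 and u(x,t) > 0 for all x, t. Let x* ∈ Ω satisfy u(x*, t) = sup_{x ∈ Ω} u(x, t) for all t ≥ 0, and suppose: (i) R₁ := sup_{t ≥ 0} u(x*, t) < ∞; (ii) u(x*, t) ≥ 1 for all t ≥ 0; and (iii) ξ(t) ≤ κ₀ for all t ≥ 0. Set R₂ := min{ξ₀, κ₀/(1 + R₁²)}; then ξ(t) ≥ R₂ for all t ≥ 0, and for every x ∈ Ω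 with u(x,0) < u(x*,0), the ratio u(x,t)/u(x*,t) is nonincreasing and satisfies u(x,t)/u(x*,t) ≤ (u(x,0)/u(x*,0)) · exp(-a R₂ (1 - u(x,0)/u(x*,0)) t / (1 + R₁κ₀)²). Consequently u(x,t) → 0 exponentially as t → ∞ for every such x. -/
open MeasureTheory

/-- If the spatial maximum `u(x*,·)` of a solution of the carcinogenesis shadow
system stays bounded, then `ξ` is bounded below by `R₂ > 0` and, at every point
with a strictly smaller initial value, `u(x,·)/u(x*,·)` decays exponentially, so
`u(x,t) → 0` as `t → ∞`. -/
theorem stmt_17 {n : ℕ} (a d κ₀ : ℝ) (ha : 0 < a) (hd : 0 < d) (hκ₀ : 0 < κ₀)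
    (Ω : Set (EuclideanSpace ℝ (Fin n)))
    (hΩbdd : Bornology.IsBounded Ω) (hΩmeas : MeasurableSet Ω)
    (hΩvol : volume Ω = 1)
    (u : EuclideanSpace ℝ (Fin n) → ℝ → ℝ) (ξ : ℝ → ℝ)
    (hsol : IsCarcSolution a d κ₀ Ω u ξ)
    (ξ₀ : ℝ) (hξ0 : ξ 0 = ξ₀) (hξ₀pos : 0 < ξ₀)
    (hupos : ∀ x ∈ Ω, ∀ t : ℝ, 0 ≤ t → 0 < u x t)
    (xstar : EuclideanSpace ℝ (Fin n)) (hxstar : xstar ∈ Ω)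
    (hmax : ∀ x ∈ Ω, ∀ t : ℝ, 0 ≤ t → u x t ≤ u xstar t)
    (R₁ : ℝ) (hR₁ : ∀ t : ℝ, 0 ≤ t → u xstar t ≤ R₁)
    (hstar_ge1 : ∀ t : ℝ, 0 ≤ t → 1 ≤ u xstar t)
    (hξκ : ∀ t : ℝ, 0 ≤ t → ξ t ≤ κ₀) :
    (∀ t : ℝ, 0 ≤ t → min ξ₀ (κ₀ / (1 + R₁ ^ 2)) ≤ ξ t) ∧
    (∀ x ∈ Ω, u x 0 < u xstar 0 →
      AntitoneOn (fun t => u x t / u xstar t) (Set.Ici 0) ∧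
      (∀ t : ℝ, 0 ≤ t →
        u x t / u xstar t ≤ (u x 0 / u xstar 0) *
          Real.exp (-(a * min ξ₀ (κ₀ / (1 + R₁ ^ 2)) *
            (1 - u x 0 / u xstar 0) * t / (1 + R₁ * κ₀) ^ 2))) ∧
      Filter.Tendsto (fun t => u x t) Filter.atTop (nhds 0)) := by
  have hR1 : 1 ≤ R₁ := (hstar_ge1 0 le_rfl).trans (hR₁ 0 le_rfl)
  have hL : 0 < 1 + R₁ ^ 2 := by positivity
  obtain ⟨m, hm⟩ : ∃ m, m = min ξ₀ (κ₀ / (1 + R₁ ^ 2)) := ⟨_, rfl⟩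
  rw [← hm]
  have hmpos : 0 < m := by rw [hm]; exact lt_min hξ₀pos (by positivity)
  have hm1 : m ≤ ξ₀ := by rw [hm]; exact min_le_left _ _
  have hm2 : (1 + R₁ ^ 2) * m ≤ κ₀ := by
    have h : m ≤ κ₀ / (1 + R₁ ^ 2) := by rw [hm]; exact min_le_right _ _
    rw [le_div_iff₀ hL] at h
    linarith
  have hint : ∀ t : ℝ, 0 ≤ t → (∫ x in Ω, (u x t) ^ 2) ≤ R₁ ^ 2 := by
    intro t ht
    have h1 : (∫ x in Ω, (u x t) ^ 2) ≤ ∫ x in Ω, R₁ ^ 2 := by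
      refine setIntegral_mono_on (hsol.int_sq t ht) ?_ hΩmeas ?_
      · exact integrableOn_const (by rw [hΩvol]; simp)
      · intro x hx
        exact pow_le_pow_left₀ (hupos x hx t ht).le ((hmax x hx t ht).trans (hR₁ t ht)) 2
    have h2 : (∫ x in Ω, R₁ ^ 2) = R₁ ^ 2 := by
      simp [Measure.real, hΩvol]
    linarith
  have hexp : ∀ c t : ℝ, HasDerivAt (fun t => Real.exp (c * t)) (Real.exp (c * t) * c) t := by
    intro c t
    simpa using ((hasDerivAt_id t).const_mul c).exp
  have hlow : ∀ t : ℝ, 0 ≤ t → m ≤ ξ t := by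
    have hD : ∀ t : ℝ, 0 ≤ t → HasDerivAt (fun t => (ξ t - m) * Real.exp ((1 + R₁ ^ 2) * t))
        ((-ξ t - ξ t * (∫ x in Ω, (u x t) ^ 2) + κ₀) * Real.exp ((1 + R₁ ^ 2) * t)
          + (ξ t - m) * (Real.exp ((1 + R₁ ^ 2) * t) * (1 + R₁ ^ 2))) t := fun t ht =>
      ((hsol.deriv_ξ t ht).sub_const m).mul (hexp _ t)
    have hmono : MonotoneOn (fun t => (ξ t - m) * Real.exp ((1 + R₁ ^ 2) * t)) (Set.Ici 0) := by
      refine monotoneOn_of_hasDerivWithinAt_nonneg (convex_Ici 0)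
        (fun t ht => (hD t ht).continuousAt.continuousWithinAt)
        (fun t ht => (hD t (interior_subset ht)).hasDerivWithinAt) ?_
      intro t ht
      have ht : 0 ≤ t := interior_subset ht
      have h1 := mul_le_mul_of_nonneg_left (hint t ht) (hsol.nonneg_ξ t ht)
      have h2 : 0 ≤ -ξ t - ξ t * (∫ x in Ω, (u x t) ^ 2) + κ₀ + (ξ t - m) * (1 + R₁ ^ 2) := by
        linarith
      have h3 := mul_nonneg h2 (Real.exp_pos ((1 + R₁ ^ 2) * t)).le
      linarith
    intro t ht
    have h := hmono (Set.mem_Ici.2 le_rfl) (Set.mem_Ici.2 ht) ht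
    simp only [mul_zero, Real.exp_zero, mul_one, hξ0] at h
    have h2 : 0 ≤ ξ t - m := by
      by_contra hneg
      have := mul_neg_of_neg_of_pos (not_le.1 hneg) (Real.exp_pos ((1 + R₁ ^ 2) * t))
      linarith
    linarith
  refine ⟨hlow, ?_⟩
  intro x hx hx0
  have hD : ∀ t : ℝ, 0 ≤ t → HasDerivAt (fun t => u x t / u xstar t)
      (-(u x t / u xstar t * (a * ξ t * (u xstar t - u x t) /
        ((1 + u x t * ξ t) * (1 + u xstar t * ξ t))))) t := by
    intro t ht
    have p1 := hupos x hx t ht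
    have p2 := hupos xstar hxstar t ht
    have p3 := hsol.nonneg_ξ t ht
    have q1 : 0 < 1 + u x t * ξ t := by positivity
    have q2 : 0 < 1 + u xstar t * ξ t := by positivity
    refine ((hsol.deriv_u x hx t ht).div (hsol.deriv_u xstar hxstar t ht) p2.ne').congr_deriv ?_
    field_simp
    ring
  have hanti : AntitoneOn (fun t => u x t / u xstar t) (Set.Ici 0) := by
    refine antitoneOn_of_hasDerivWithinAt_nonpos (convex_Ici 0)
        (fun t ht => (hD t ht).continuousAt.continuousWithinAt)
        (fun t ht => (hD t (interior_subset ht)).hasDerivWithinAt) ?_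
    intro t ht
    have ht : 0 ≤ t := interior_subset ht
    have p1 := hupos x hx t ht
    have p2 := hupos xstar hxstar t ht
    have p3 := hsol.nonneg_ξ t ht
    have p4 : 0 ≤ u xstar t - u x t := sub_nonneg.2 (hmax x hx t ht)
    have : 0 ≤ u x t / u xstar t * (a * ξ t * (u xstar t - u x t) /
        ((1 + u x t * ξ t) * (1 + u xstar t * ξ t))) := by positivity
    linarith
  have hr0 : 0 < 1 - u x 0 / u xstar 0 := by
    have := (div_lt_one (hupos xstar hxstar 0 le_rfl)).2 hx0
    linarith
  obtain ⟨c, hc⟩ : ∃ c, c = a * m * (1 - u x 0 / u xstar 0) / (1 + R₁ * κ₀) ^ 2 := ⟨_, rfl⟩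
  have hcpos : 0 < c := by rw [hc]; positivity
  have hbound : ∀ t : ℝ, 0 ≤ t → u x t / u xstar t ≤ (u x 0 / u xstar 0) * Real.exp (-(c * t)) := by
    have hE : ∀ t : ℝ, 0 ≤ t → HasDerivAt (fun t => u x t / u xstar t * Real.exp (c * t)) _ t :=
      fun t ht => (hD t ht).mul (hexp c t)
    have hanti2 : AntitoneOn (fun t => u x t / u xstar t * Real.exp (c * t)) (Set.Ici 0) := by
      refine antitoneOn_of_hasDerivWithinAt_nonpos (convex_Ici 0)
          (fun t ht => (hE t ht).continuousAt.continuousWithinAt)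
          (fun t ht => (hE t (interior_subset ht)).hasDerivWithinAt) ?_
      intro t ht
      have ht : 0 ≤ t := interior_subset ht
      have p1 := hupos x hx t ht
      have p2 := hupos xstar hxstar t ht
      have p3 := hsol.nonneg_ξ t ht
      have hr := hanti (Set.mem_Ici.2 le_rfl) (Set.mem_Ici.2 ht) ht
      simp only at hr
      have hux : u x t = u x t / u xstar t * u xstar t := by field_simp
      have p4 : 1 - u x 0 / u xstar 0 ≤ u xstar t - u x t := by
        have h1 : 0 ≤ 1 - u x t / u xstar t := by linarith
        nlinarith [hstar_ge1 t ht]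
      have b1 : u x t * ξ t ≤ R₁ * κ₀ :=
        mul_le_mul ((hmax x hx t ht).trans (hR₁ t ht)) (hξκ t ht) p3 (by linarith)
      have b2 : u xstar t * ξ t ≤ R₁ * κ₀ :=
        mul_le_mul (hR₁ t ht) (hξκ t ht) p3 (by linarith)
      have key : c ≤ a * ξ t * (u xstar t - u x t) /
          ((1 + u x t * ξ t) * (1 + u xstar t * ξ t)) := by
        rw [hc]
        have n1 : 0 ≤ u xstar t - u x t := by linarith
        have l := hlow t ht
        apply div_le_div₀
        · positivity
        · apply mul_le_mul _ p4 hr0.le (by positivity)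
          exact mul_le_mul_of_nonneg_left l ha.le
        · positivity
        · rw [sq]
          apply mul_le_mul <;> first | linarith | positivity
      have h3 := mul_nonneg (mul_nonneg (div_pos p1 p2).le (sub_nonneg.2 key))
        (Real.exp_pos (c * t)).le
      linarith
    intro t ht
    have h := hanti2 (Set.mem_Ici.2 le_rfl) (Set.mem_Ici.2 ht) ht
    simp only [mul_zero, Real.exp_zero, mul_one] at h
    rw [Real.exp_neg, ← div_eq_mul_inv, le_div_iff₀ (Real.exp_pos _)]
    exact h
  refine ⟨hanti, ?_, ?_⟩
  · intro t ht
    have h := hbound t ht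
    have e : c * t = a * m * (1 - u x 0 / u xstar 0) * t / (1 + R₁ * κ₀) ^ 2 := by
      rw [hc]; ring
    rw [e] at h
    exact h
  · have hlim : Filter.Tendsto (fun t : ℝ => R₁ * ((u x 0 / u xstar 0) * Real.exp (-(c * t))))
        Filter.atTop (nhds 0) := by
      have h1 : Filter.Tendsto (fun t : ℝ => Real.exp (-(c * t))) Filter.atTop (nhds 0) :=
        Real.tendsto_exp_neg_atTop_nhds_zero.comp (Filter.tendsto_id.const_mul_atTop hcpos)
      simpa using (h1.const_mul (u x 0 / u xstar 0)).const_mul R₁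
    refine tendsto_of_tendsto_of_tendsto_of_le_of_le' tendsto_const_nhds hlim ?_ ?_
    · filter_upwards [Filter.eventually_ge_atTop 0] with t ht
      exact hsol.nonneg_u x hx t ht
    · filter_upwards [Filter.eventually_ge_atTop 0] with t ht
      have p1 := hupos x hx t ht
      have p2 := hupos xstar hxstar t ht
      have hux : u x t = u xstar t * (u x t / u xstar t) := by field_simp
      rw [hux]
      exact mul_le_mul (hR₁ t ht) (hbound t ht) (div_pos p1 p2).le (by linarith)
end

section
/- Let Ω ⊂ ℝⁿ be compact, equal to the closure of a nonempty open set, with Lebesgue measure |Ω| = 1. Let a, d, κ₀ > 0 satisfy 2(a - d) ≥ 1, a > d, and κ₀ ≥ 4a, and let λ satisfy 1/2 ≤ λ ≤ 1 - 2a/κ₀. Let u₀ ∈ C(Ω) be nonnegative and ξ₀ ∈ ℝ satisfy ξ₀ ∫_Ω u₀(x)² dx > λκ₀ and 0 < ξ₀ ≤ (1-λ)κ₀. Suppose the set Ω* := {x* ∈ Ω : u₀(x*) = max_{x ∈ Ω} u₀(x)} has measure zero and max_{x∈Ω} u₀(x) > 0. Let (u, ξ) be a nonnegative solution of the carcinogenesis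 shadow system on [0, ∞) with u(·,0) = u₀, ξ(0) = ξ₀, u(·,t) continuous on Ω for each t, ξ(t) > 0 for all t, such that t ↦ ∫_Ω u(x,t)² dx is differentiable with derivative ∫_Ω 2u u_t dx, and sup_{t>0} ∫_Ω u(x,t) dx < ∞. Then: sup_{t>0} u(x*, t) = +∞ for every x* ∈ Ω*; sup_{t>0} u(x, t) < +∞ for every x ∈ Ω \ Ω*; and inf_{t>0} ξ(t) = 0. -/
open MeasureTheory

lemma mono_Ici {F F' : ℝ → ℝ} {t0 t : ℝ} (hF : ∀ s, t0 ≤ s → s ≤ t → HasDerivAt F (F' s) s)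
    (h : ∀ s, t0 < s → s < t → 0 ≤ F' s) (ht : t0 ≤ t) : F t0 ≤ F t := by
  have hm : MonotoneOn F (Set.Icc t0 t) := by
    apply monotoneOn_of_deriv_nonneg (convex_Icc _ _)
    · intro s hs
      exact (hF s hs.1 hs.2).continuousAt.continuousWithinAt
    · intro s hs
      rw [interior_Icc] at hs
      exact (hF s hs.1.le hs.2.le).differentiableAt.differentiableWithinAt
    · intro s hs
      rw [interior_Icc] at hs
      rw [(hF s hs.1.le hs.2.le).deriv]
      exact h s hs.1 hs.2
  exact hm ⟨le_rfl, ht⟩ ⟨ht, le_rfl⟩ ht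

/-- linear differential inequality `D' ≥ h D` -/
lemma lin_ineq {D D' h : ℝ → ℝ} {t0 : ℝ} (hD : ∀ s, t0 ≤ s → HasDerivAt D (D' s) s)
    (hh : ContinuousOn h (Set.Ici t0)) (hle : ∀ s, t0 ≤ s → h s * D s ≤ D' s) {t : ℝ}
    (ht : t0 ≤ t) : ∃ E : ℝ, 0 < E ∧ D t0 * E ≤ D t := by
  have hc : Continuous (fun s => h (max s t0)) :=
    hh.comp_continuous (by fun_prop) (fun s => Set.mem_Ici.2 (le_max_right _ _))
  set H : ℝ → ℝ := fun s => ∫ r in t0..s, h (max r t0) with hH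
  have hHd : ∀ s, HasDerivAt H (h (max s t0)) s := fun s =>
    intervalIntegral.integral_hasDerivAt_right (hc.intervalIntegrable _ _)
      hc.stronglyMeasurable.stronglyMeasurableAtFilter hc.continuousAt
  have key := mono_Ici (F := fun s => D s * Real.exp (-H s))
    (F' := fun s => D' s * Real.exp (-H s) + D s * (Real.exp (-H s) * (-h (max s t0))))
    (t0 := t0) (t := t) (fun s hs _ => (hD s hs).mul ((hHd s).neg.exp)) ?_ ht
  · refine ⟨Real.exp (H t), Real.exp_pos _, ?_⟩
    have h0 : H t0 = 0 := by simp [hH]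
    simp only [h0, neg_zero, Real.exp_zero, mul_one] at key
    calc D t0 * Real.exp (H t) ≤ D t * Real.exp (-H t) * Real.exp (H t) :=
          mul_le_mul_of_nonneg_right key (Real.exp_pos _).le
      _ = D t := by rw [mul_assoc, ← Real.exp_add]; simp
  · intro s hs _
    simp only [max_eq_left hs.le]
    have := mul_nonneg (sub_nonneg.2 (hle s hs.le)) (Real.exp_pos (-H s)).le
    nlinarith

lemma pos_meas {n : ℕ} {Ω Θ : Set (EuclideanSpace ℝ (Fin n))} (hΘopen : IsOpen Θ)
    (hΩΘ : Ω = closure Θ) {g : EuclideanSpace ℝ (Fin n) → ℝ} (hg : ContinuousOn g Ω)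
    {y : EuclideanSpace ℝ (Fin n)} (hy : y ∈ Ω) {c : ℝ} (hc : c < g y) :
    0 < volume {x ∈ Ω | c < g x} := by
  obtain ⟨V, hV, hVe⟩ := continuousOn_iff'.1 hg (Set.Ioi c) isOpen_Ioi
  have hyV : y ∈ V := by
    have : y ∈ g ⁻¹' Set.Ioi c ∩ Ω := ⟨hc, hy⟩
    rw [hVe] at this
    exact this.1
  have hne : (V ∩ Θ).Nonempty := mem_closure_iff.1 (hΩΘ ▸ hy) V hV hyV
  refine lt_of_lt_of_le ((hV.inter hΘopen).measure_pos volume hne) (measure_mono ?_)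
  rintro x ⟨hxV, hxΘ⟩
  have hxΩ : x ∈ Ω := hΩΘ ▸ subset_closure hxΘ
  have : x ∈ g ⁻¹' Set.Ioi c ∩ Ω := by rw [hVe]; exact ⟨hxV, hxΩ⟩
  exact ⟨hxΩ, this.1⟩

lemma diff_id {a d U z ξ : ℝ} (hU : 0 ≤ U) (hz : 0 ≤ z) (hξ : 0 ≤ ξ) :
    (a * U * ξ / (1 + U * ξ) - d) * U - (a * z * ξ / (1 + z * ξ) - d) * z =
    (a * ξ * (U + z + ξ * U * z) / ((1 + U * ξ) * (1 + z * ξ)) - d) * (U - z) := by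
  have h1 : 1 + U * ξ ≠ 0 := by positivity
  have h2 : 1 + z * ξ ≠ 0 := by positivity
  field_simp
  ring

lemma rate_id {a d U z ξ : ℝ} (hU : 0 ≤ U) (hz : 0 ≤ z) (hξ : 0 ≤ ξ) :
    (a * z * ξ / (1 + z * ξ) - d) - (a * U * ξ / (1 + U * ξ) - d) =
    - (a * ξ * (U - z) / ((1 + z * ξ) * (1 + U * ξ))) := by
  have h1 : 1 + U * ξ ≠ 0 := by positivity
  have h2 : 1 + z * ξ ≠ 0 := by positivity
  field_simp
  ring

/-- Invariant region. -/
lemma invariant {n : ℕ} (a d κ₀ lam : ℝ) (ha : 0 < a) (hκ₀ : 0 < κ₀)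
    (had : 1 ≤ 2 * (a - d)) 
    (hlam₁ : 1 / 2 ≤ lam) (hlam₂ : lam ≤ 1 - 2 * a / κ₀)
    (Ω : Set (EuclideanSpace ℝ (Fin n)))
    (hΩcpt : IsCompact Ω) (hΩvol : volume Ω = 1)
    (u : EuclideanSpace ℝ (Fin n) → ℝ → ℝ) (ξ : ℝ → ℝ)
    (hsol : IsCarcSolution a d κ₀ Ω u ξ)
    (hini₁ : lam * κ₀ < ξ 0 * ∫ x in Ω, (u x 0) ^ 2)
    (hini₂ : ξ 0 ≤ (1 - lam) * κ₀)
    (hucont : ∀ t : ℝ, 0 ≤ t → ContinuousOn (fun x => u x t) Ω)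
    (hξpos : ∀ t : ℝ, 0 ≤ t → 0 < ξ t)
    (hint_u : ∀ t : ℝ, 0 ≤ t → IntegrableOn (fun x => u x t) Ω volume)
    (hL2deriv : ∀ t : ℝ, 0 ≤ t →
      HasDerivAt (fun s => ∫ x in Ω, (u x s) ^ 2)
        (∫ x in Ω, 2 * u x t * ((a * u x t * ξ t / (1 + u x t * ξ t) - d) * u x t)) t) :
    ∀ t, 0 ≤ t → lam * κ₀ < ξ t * (∫ x in Ω, (u x t) ^ 2) ∧ ξ t ≤ (1 - lam) * κ₀ := by
  have hB : 2 * a ≤ (1 - lam) * κ₀ := by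
    have : 2 * a / κ₀ ≤ 1 - lam := by linarith
    rwa [div_le_iff₀ hκ₀] at this
  have hmeas : MeasurableSet Ω := hΩcpt.isClosed.measurableSet
  set I : ℝ → ℝ := fun s => ∫ x in Ω, (u x s) ^ 2 with hI
  have hI0 : ∀ t, 0 ≤ I t := fun t => integral_nonneg (fun x => sq_nonneg _)
  set I' : ℝ → ℝ := fun t =>
    ∫ x in Ω, 2 * u x t * ((a * u x t * ξ t / (1 + u x t * ξ t) - d) * u x t) with hI'
  have hId : ∀ t, 0 ≤ t → HasDerivAt I (I' t) t := hL2deriv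
  have hξd : ∀ t, 0 ≤ t → HasDerivAt ξ (-ξ t - ξ t * I t + κ₀) t := hsol.deriv_ξ
  -- lower bound of the derivative
  have hI'low : ∀ t, 0 ≤ t → 2 * (a - d) * (ξ t * I t) - a * (1 + I t) ≤ ξ t * I' t := by
    intro t ht
    have hu := hucont t ht
    have hnn := hsol.nonneg_u
    have hint : IntegrableOn (fun x => 2 * u x t *
        ((a * u x t * ξ t / (1 + u x t * ξ t) - d) * u x t)) Ω volume := by
      apply ContinuousOn.integrableOn_compact hΩcpt
      have hne : ∀ x ∈ Ω, 1 + u x t * ξ t ≠ 0 := by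
        intro x hx
        have := mul_nonneg (hnn x hx t ht) (hξpos t ht).le
        positivity
      fun_prop (disch := assumption)
    have hsq := hsol.int_sq t ht
    have hone : IntegrableOn (fun _ : EuclideanSpace ℝ (Fin n) => (1 : ℝ)) Ω volume := by
      simp [integrableOn_const_iff, hΩvol]
    have hadd : IntegrableOn (fun x => a * (1 + (u x t) ^ 2)) Ω volume :=
      (hone.add hsq).const_mul a
    have hsub : IntegrableOn (fun x => 2 * (a - d) * ξ t * (u x t) ^ 2 - a * (1 + (u x t) ^ 2))
        Ω volume := (hsq.const_mul _).sub hadd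
    have e1 : ∫ x in Ω, (2 * (a - d) * ξ t * (u x t) ^ 2 - a * (1 + (u x t) ^ 2)) =
        2 * (a - d) * (ξ t * I t) - a * (1 + I t) := by
      rw [integral_sub (hsq.const_mul _) hadd, integral_const_mul,
        integral_const_mul, integral_add hone hsq]
      simp [hI, measureReal_def, hΩvol]
      ring
    rw [← e1, hI', ← integral_const_mul]
    apply setIntegral_mono_on hsub
      (hint.const_mul _) hmeas
    intro x hx
    have hx0 := hnn x hx t ht
    have hxi := hξpos t ht
    set z := u x t
    set k := ξ t
    have h1 : 0 < 1 + z * k := by positivity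
    have e2 : k * (2 * z * ((a * z * k / (1 + z * k) - d) * z)) =
        2 * (a - d) * k * z ^ 2 - 2 * a * (k * z ^ 2 / (1 + z * k)) := by
      field_simp
      ring
    have e3 : k * z ^ 2 / (1 + z * k) ≤ z := by
      rw [div_le_iff₀ h1]; nlinarith
    rw [e2]
    nlinarith [mul_le_mul_of_nonneg_left e3 ha.le, mul_nonneg ha.le (sq_nonneg (z - 1))]
  have hwcont : ∀ t, 0 ≤ t → ContinuousAt (fun s => ξ s * I s) t := fun t ht =>
    ((hξd t ht).mul (hId t ht)).continuousAt
  -- upper bound for ξ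
  have hξup : ∀ t, 0 ≤ t → (∀ s, 0 < s → s < t → lam * κ₀ < ξ s * I s) →
      ξ t ≤ (1 - lam) * κ₀ := by
    intro t ht h
    have := mono_Ici (F := fun s => ((1 - lam) * κ₀ - ξ s) * Real.exp s)
      (F' := fun s => (-(-ξ s - ξ s * I s + κ₀)) * Real.exp s
        + ((1 - lam) * κ₀ - ξ s) * Real.exp s) (t0 := 0) (t := t)
      (fun s hs _ => ((hξd s hs).const_sub _).mul (Real.hasDerivAt_exp s)) ?_ ht
    · simp only [Real.exp_zero, mul_one] at this
      have h2 : 0 ≤ ((1 - lam) * κ₀ - ξ t) * Real.exp t := by linarith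
      have := nonneg_of_mul_nonneg_left h2 (Real.exp_pos t)
      linarith
    · intro s hs hst
      have := mul_nonneg (sub_nonneg.2 (h s hs hst).le) (Real.exp_pos s).le
      nlinarith
  have hw : ∀ t, 0 ≤ t → lam * κ₀ < ξ t * I t := by
    by_contra! hcon
    obtain ⟨t1, ht1, hbad⟩ := hcon
    set S : Set ℝ := {t | t ∈ Set.Icc 0 t1 ∧ ξ t * I t ≤ lam * κ₀} with hS
    have hScl : IsCompact S := by
      apply IsCompact.of_isClosed_subset isCompact_Icc (s := Set.Icc 0 t1) _ (fun x hx => hx.1)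
      have : ContinuousOn (fun s => ξ s * I s) (Set.Icc 0 t1) :=
        fun s hs => (hwcont s hs.1).continuousWithinAt
      exact this.preimage_isClosed_of_isClosed isClosed_Icc isClosed_Iic
    obtain ⟨T, hT, hTmin⟩ := hScl.exists_isLeast ⟨t1, ⟨ht1, le_rfl⟩, hbad⟩
    have hT0 : 0 ≤ T := hT.1.1
    have hbefore : ∀ s, 0 ≤ s → s < T → lam * κ₀ < ξ s * I s := by
      intro s hs hsT
      by_contra! hc
      exact absurd (hTmin ⟨⟨hs, hsT.le.trans hT.1.2⟩, hc⟩) (not_le.2 hsT)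
    obtain ⟨M, hM⟩ := (isCompact_Icc (a := (0:ℝ)) (b := T)).exists_bound_of_continuousOn
      (f := I) (fun s hs => (hId s hs.1).continuousAt.continuousWithinAt)
    have := mono_Ici (F := fun s => (ξ s * I s - lam * κ₀) * Real.exp (M * s))
      (F' := fun s => ((-ξ s - ξ s * I s + κ₀) * I s + ξ s * I' s) * Real.exp (M * s)
        + (ξ s * I s - lam * κ₀) * (Real.exp (M * s) * (M * 1))) (t0 := 0) (t := T)
      (fun s hs _ => (((hξd s hs).mul (hId s hs)).sub_const _).mul
        (((hasDerivAt_id s).const_mul M).exp)) ?_ hT0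
    · simp only [mul_zero, Real.exp_zero, mul_one] at this
      have h2 : 0 < (ξ T * I T - lam * κ₀) * Real.exp (M * T) := by
        have : lam * κ₀ < ξ 0 * I 0 := hini₁
        linarith
      have := pos_of_mul_pos_left h2 (Real.exp_pos _).le
      linarith [hT.2]
    · intro s hs hsT
      have hsw := hbefore s hs.le hsT
      have hsξ := hξup s hs.le (fun r hr hrs => hbefore r hr.le (hrs.trans hsT))
      have hspos := hξpos s hs.le
      have hMs : I s ≤ M := (le_abs_self _).trans (hM s ⟨hs.le, hsT.le⟩)
      have hI1 : 1 ≤ I s := by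
        by_contra! hc
        have h1 : ξ s * I s ≤ ξ s := by nlinarith
        nlinarith
      have hlow := hI'low s hs.le
      have hw0 : 0 ≤ ξ s * I s := mul_nonneg hspos.le (hI0 s)
      have hstep : ξ s * I s - 2 * a * I s ≤ ξ s * I' s := by nlinarith
      have hfin : 0 ≤ ((-ξ s - ξ s * I s + κ₀) * I s + ξ s * I' s)
          + (ξ s * I s - lam * κ₀) * M := by
        have h3 : (ξ s * I s - lam * κ₀) * I s ≤ (ξ s * I s - lam * κ₀) * M :=
          mul_le_mul_of_nonneg_left hMs (by linarith)
        have h4 : 2 * a * I s ≤ (1 - lam) * κ₀ * I s := mul_le_mul_of_nonneg_right hB (hI0 s)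
        nlinarith
      have := mul_nonneg hfin (Real.exp_pos (M * s)).le
      nlinarith
  intro t ht
  exact ⟨hw t ht, hξup t ht (fun s hs _ => hw s hs.le)⟩

/-- Formation of unbounded spikes: the solution of the carcinogenesis shadow
system grows to `+∞` exactly at the maximum points of the initial datum, stays
bounded elsewhere, and `inf_{t>0} ξ(t) = 0`. -/
theorem stmt_18 {n : ℕ} (a d κ₀ lam : ℝ) (ha : 0 < a) (hd : 0 < d) (hκ₀ : 0 < κ₀)
    (had : 1 ≤ 2 * (a - d)) (had' : d < a) (hκa : 4 * a ≤ κ₀)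
    (hlam₁ : 1 / 2 ≤ lam) (hlam₂ : lam ≤ 1 - 2 * a / κ₀)
    (Ω Θ : Set (EuclideanSpace ℝ (Fin n)))
    (hΩcpt : IsCompact Ω) (hΘopen : IsOpen Θ) (hΘne : Θ.Nonempty)
    (hΩΘ : Ω = closure Θ) (hΩvol : volume Ω = 1)
    (u₀ : EuclideanSpace ℝ (Fin n) → ℝ)
    (hu₀cont : ContinuousOn u₀ Ω) (hu₀nn : ∀ x ∈ Ω, 0 ≤ u₀ x)
    (ξ₀ : ℝ)
    (hini₁ : lam * κ₀ < ξ₀ * ∫ x in Ω, (u₀ x) ^ 2)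
    (hini₂ : 0 < ξ₀ ∧ ξ₀ ≤ (1 - lam) * κ₀)
    (hstar_null : volume {y ∈ Ω | ∀ x ∈ Ω, u₀ x ≤ u₀ y} = 0)
    (hmaxpos : ∃ y ∈ Ω, (∀ x ∈ Ω, u₀ x ≤ u₀ y) ∧ 0 < u₀ y)
    (u : EuclideanSpace ℝ (Fin n) → ℝ → ℝ) (ξ : ℝ → ℝ)
    (hsol : IsCarcSolution a d κ₀ Ω u ξ)
    (hu0 : ∀ x ∈ Ω, u x 0 = u₀ x) (hξ0 : ξ 0 = ξ₀)
    (hucont : ∀ t : ℝ, 0 ≤ t → ContinuousOn (fun x => u x t) Ω)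
    (hξpos : ∀ t : ℝ, 0 ≤ t → 0 < ξ t)
    (hint_u : ∀ t : ℝ, 0 ≤ t → IntegrableOn (fun x => u x t) Ω volume)
    (hL2deriv : ∀ t : ℝ, 0 ≤ t →
      HasDerivAt (fun s => ∫ x in Ω, (u x s) ^ 2)
        (∫ x in Ω, 2 * u x t * ((a * u x t * ξ t / (1 + u x t * ξ t) - d) * u x t)) t)
    (hmass : ∃ C : ℝ, ∀ t : ℝ, 0 ≤ t → (∫ x in Ω, u x t) ≤ C) :
    (∀ y ∈ Ω, (∀ x ∈ Ω, u₀ x ≤ u₀ y) → ∀ C : ℝ, ∃ t : ℝ, 0 ≤ t ∧ C < u y t) ∧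
    (∀ y ∈ Ω, ¬(∀ x ∈ Ω, u₀ x ≤ u₀ y) → ∃ C : ℝ, ∀ t : ℝ, 0 ≤ t → u y t ≤ C) ∧
    (∀ ε : ℝ, 0 < ε → ∃ t : ℝ, 0 ≤ t ∧ ξ t < ε) := by
  have hmeas : MeasurableSet Ω := hΩcpt.isClosed.measurableSet
  have hnn := hsol.nonneg_u
  have hinv := invariant a d κ₀ lam ha hκ₀ had hlam₁ hlam₂ Ω hΩcpt hΩvol u ξ hsol
    (by rw [hξ0, setIntegral_congr_fun (g := fun x => (u₀ x) ^ 2) hmeas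
          (fun x hx => by simp only [hu0 x hx])]; exact hini₁)
    (by rw [hξ0]; exact hini₂.2) hucont hξpos hint_u hL2deriv
  have hucont_t : ∀ x ∈ Ω, ContinuousOn (u x) (Set.Ici 0) := fun x hx t ht =>
    (hsol.deriv_u x hx t ht).continuousAt.continuousWithinAt
  have hξc := hsol.cont_ξ
  have hden : ∀ x ∈ Ω, ∀ t, 0 ≤ t → 0 < 1 + u x t * ξ t := by
    intro x hx t ht
    have := mul_nonneg (hnn x hx t ht) (hξpos t ht).le
    linarith
  -- comparison
  have hcomp : ∀ x ∈ Ω, ∀ y ∈ Ω, u₀ x ≤ u₀ y → ∀ t, 0 ≤ t → u x t ≤ u y t := by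
    intro x hx y hy hxy t ht
    have hux := hucont_t x hx
    have huy := hucont_t y hy
    obtain ⟨E, hE, hle⟩ := lin_ineq (t0 := 0) (D := fun s => u y s - u x s)
      (D' := fun s => (a * u y s * ξ s / (1 + u y s * ξ s) - d) * u y s -
        (a * u x s * ξ s / (1 + u x s * ξ s) - d) * u x s)
      (h := fun s => a * ξ s * (u y s + u x s + ξ s * u y s * u x s) /
        ((1 + u y s * ξ s) * (1 + u x s * ξ s)) - d)
      (fun s hs => (hsol.deriv_u y hy s hs).sub (hsol.deriv_u x hx s hs))
      (by
        have hne : ∀ s ∈ Set.Ici (0:ℝ), (1 + u y s * ξ s) * (1 + u x s * ξ s) ≠ 0 :=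
          fun s hs => (mul_pos (hden y hy s hs) (hden x hx s hs)).ne'
        fun_prop (disch := assumption))
      (fun s hs => (diff_id (hnn y hy s hs) (hnn x hx s hs) (hξpos s hs).le).ge) ht
    have : 0 ≤ (u y 0 - u x 0) * E := by
      rw [hu0 x hx, hu0 y hy]
      exact mul_nonneg (by linarith) hE.le
    linarith
  have hpos : ∀ x ∈ Ω, 0 < u₀ x → ∀ t, 0 ≤ t → 0 < u x t := by
    intro x hx hx0 t ht
    have hux := hucont_t x hx
    obtain ⟨E, hE, hle⟩ := lin_ineq (t0 := 0) (D := u x)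
      (D' := fun s => (a * u x s * ξ s / (1 + u x s * ξ s) - d) * u x s)
      (h := fun s => (a * u x s * ξ s / (1 + u x s * ξ s) - d))
      (fun s hs => hsol.deriv_u x hx s hs)
      (by
        have hne : ∀ s ∈ Set.Ici (0:ℝ), (1 + u x s * ξ s) ≠ 0 :=
          fun s hs => (hden x hx s hs).ne'
        fun_prop (disch := assumption))
      (fun s hs => le_rfl) ht
    rw [hu0 x hx] at hle
    exact lt_of_lt_of_le (mul_pos hx0 hE) hle
  obtain ⟨y0, hy0, hy0max, hy0pos⟩ := hmaxpos
  have hlk : 0 < lam * κ₀ := mul_pos (by linarith) hκ₀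
  set B := (1 - lam) * κ₀ with hB
  have hBpos : 0 < B := lt_of_lt_of_le hini₂.1 hini₂.2
  -- claim 1
  have claim1 : ∀ y ∈ Ω, (∀ x ∈ Ω, u₀ x ≤ u₀ y) → ∀ C : ℝ, ∃ t : ℝ, 0 ≤ t ∧ C < u y t := by
    intro y hy hymax C
    by_contra! hM'
    have hypos : 0 < u₀ y := lt_of_lt_of_le hy0pos (hymax y0 hy0)
    set U := u y with hU
    have hUpos : ∀ t, 0 ≤ t → 0 < U t := hpos y hy hypos
    have hMpos : 0 < C := lt_of_lt_of_le (hUpos 0 le_rfl) (hM' 0 le_rfl)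
    have hxU : ∀ x ∈ Ω, ∀ t, 0 ≤ t → u x t ≤ U t := fun x hx =>
      hcomp x hx y hy (hymax x hx)
    have hIU : ∀ t, 0 ≤ t → ∫ x in Ω, (u x t) ^ 2 ≤ (U t) ^ 2 := by
      intro t ht
      have : ∫ x in Ω, (u x t) ^ 2 ≤ ∫ x in Ω, (U t) ^ 2 := by
        apply setIntegral_mono_on (hsol.int_sq t ht) _ hmeas
        · intro x hx
          exact pow_le_pow_left₀ (hnn x hx t ht) (hxU x hx t ht) 2
        · simp [integrableOn_const_iff, hΩvol]
      simpa [measureReal_def, hΩvol] using this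
    have hlow : ∀ t, 0 ≤ t → lam * κ₀ / C ≤ ξ t * U t := by
      intro t ht
      have h1 := (hinv t ht).1
      have h2 := mul_le_mul_of_nonneg_left (hIU t ht) (hξpos t ht).le
      have h3 : ξ t * U t ^ 2 ≤ ξ t * U t * C := by
        have := mul_le_mul_of_nonneg_left (hM' t ht)
          (mul_pos (hξpos t ht) (hUpos t ht)).le
        nlinarith
      rw [div_le_iff₀ hMpos]
      linarith
    -- decay of the ratio
    have hdecay : ∀ x ∈ Ω, u₀ x < u₀ y → Filter.Tendsto (fun t => u x t) Filter.atTop (nhds 0) := by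
      intro x hx hxy
      set r0 := u₀ x / u₀ y with hr0
      have hr01 : r0 < 1 := by rw [hr0, div_lt_one hypos]; exact hxy
      have hdr : ∀ s, 0 ≤ s → HasDerivAt (fun s => u x s / U s)
          (-(a * ξ s * (U s - u x s) / ((1 + u x s * ξ s) * (1 + U s * ξ s))) *
            (u x s / U s)) s := by
        intro s hs
        have := (hsol.deriv_u x hx s hs).div (hsol.deriv_u y hy s hs) (hUpos s hs).ne'
        refine this.congr_deriv ?_
        rw [← rate_id (d := d) (hUpos s hs).le (hnn x hx s hs) (hξpos s hs).le]
        have := (hUpos s hs).ne'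
        change u y s ≠ 0 at this
        simp only [hU]
        generalize (a * u x s * ξ s / (1 + u x s * ξ s) - d) = p
        generalize (a * u y s * ξ s / (1 + u y s * ξ s) - d) = q
        field_simp
      have hrnn : ∀ s, 0 ≤ s → 0 ≤ u x s / U s := fun s hs =>
        div_nonneg (hnn x hx s hs) (hUpos s hs).le
      have hrate0 : ∀ s, 0 ≤ s →
          0 ≤ a * ξ s * (U s - u x s) / ((1 + u x s * ξ s) * (1 + U s * ξ s)) := by
        intro s hs
        have h1 := hden x hx s hs
        have h2 : 0 < 1 + U s * ξ s := hden y hy s hs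
        have h3 := sub_nonneg.2 (hxU x hx s hs)
        have h4 := hξpos s hs
        positivity
      have hr : ∀ t, 0 ≤ t → u x t / U t ≤ r0 := by
        intro t ht
        have := mono_Ici (F := fun s => -(u x s / U s)) (t0 := 0) (t := t)
          (fun s hs _ => (hdr s hs).neg)
          (fun s hs _ => by
            have := mul_nonneg (hrate0 s hs.le) (hrnn s hs.le)
            linarith) ht
        simp only [hU] at this
        rw [hu0 x hx, hu0 y hy] at this
        simp only [hU]
        linarith
      set c := a * (1 - r0) * (lam * κ₀ / C) / (1 + B * C) ^ 2 with hc
      have hcpos : 0 < c := by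
        have : 0 < 1 - r0 := by linarith
        positivity
      have hrate : ∀ s, 0 ≤ s →
          c ≤ a * ξ s * (U s - u x s) / ((1 + u x s * ξ s) * (1 + U s * ξ s)) := by
        intro s hs
        have h1 := hden x hx s hs
        have h2 : 0 < 1 + U s * ξ s := hden y hy s hs
        have h4 := hξpos s hs
        have h5 := hUpos s hs
        have hUξ : U s * ξ s ≤ B * C := by
          rw [mul_comm B C]
          exact mul_le_mul (hM' s hs) (hinv s hs).2 h4.le hMpos.le
        have hxξ : u x s * ξ s ≤ U s * ξ s := mul_le_mul_of_nonneg_right (hxU x hx s hs) h4.le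
        have hz : u x s ≤ r0 * U s := by
          have := hr s hs
          rwa [div_le_iff₀ h5] at this
        rw [hc]
        have hr1 : 0 ≤ 1 - r0 := by linarith
        apply div_le_div₀
        · exact mul_nonneg (by positivity) (sub_nonneg.2 (hxU x hx s hs))
        · calc a * (1 - r0) * (lam * κ₀ / C) ≤ a * (1 - r0) * (ξ s * U s) :=
                mul_le_mul_of_nonneg_left (hlow s hs) (by positivity)
            _ = a * ξ s * (U s - r0 * U s) := by ring
            _ ≤ a * ξ s * (U s - u x s) :=
                mul_le_mul_of_nonneg_left (by linarith) (by positivity)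
        · positivity
        · rw [sq]
          exact mul_le_mul (by linarith) (by linarith) h2.le (by positivity)
      have hbd : ∀ t, 0 ≤ t → u x t ≤ C * Real.exp (-(c * t)) := by
        intro t ht
        have := mono_Ici (F := fun s => -((u x s / U s) * Real.exp (c * s))) (t0 := 0) (t := t)
          (fun s hs _ => ((hdr s hs).mul (((hasDerivAt_id s).const_mul c).exp)).neg)
          (fun s hs _ => by
            have h1 := mul_nonneg (mul_nonneg (sub_nonneg.2 (hrate s hs.le)) (hrnn s hs.le))
              (Real.exp_pos (c * s)).le
            simp only [id]
            nlinarith) ht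
        simp only [mul_zero, Real.exp_zero, mul_one] at this
        have h0 := hr 0 le_rfl
        have h1 : u x t / U t * Real.exp (c * t) ≤ 1 := by linarith
        have h2 : u x t / U t ≤ Real.exp (-(c * t)) := by
          rw [Real.exp_neg, ← one_div, le_div_iff₀ (Real.exp_pos _)]
          exact h1
        rw [div_le_iff₀ (hUpos t ht)] at h2
        refine h2.trans ?_
        rw [mul_comm]
        exact mul_le_mul_of_nonneg_right (hM' t ht) (Real.exp_pos _).le
      have hlim : Filter.Tendsto (fun t => C * Real.exp (-(c * t))) Filter.atTop (nhds 0) := by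
        have h1 : Filter.Tendsto (fun t : ℝ => c * t) Filter.atTop Filter.atTop :=
          Filter.tendsto_id.const_mul_atTop hcpos
        have h2 := (Real.tendsto_exp_neg_atTop_nhds_zero.comp h1).const_mul C
        simpa using h2
      refine tendsto_of_tendsto_of_tendsto_of_le_of_le' tendsto_const_nhds hlim ?_ ?_
      · filter_upwards [Filter.eventually_ge_atTop 0] with t ht using hnn x hx t ht
      · filter_upwards [Filter.eventually_ge_atTop 0] with t ht using hbd t ht
    have hI0 : Filter.Tendsto (fun t => ∫ x in Ω, (u x t) ^ 2) Filter.atTop (nhds 0) := by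
      have := tendsto_integral_filter_of_dominated_convergence (μ := volume.restrict Ω)
        (F := fun t x => (u x t) ^ 2) (f := fun _ => (0:ℝ)) (l := Filter.atTop)
        (fun _ => C ^ 2) ?_ ?_ ?_ ?_
      · simpa using this
      · filter_upwards [Filter.eventually_ge_atTop 0] with t ht
          using (hsol.int_sq t ht).aestronglyMeasurable
      · filter_upwards [Filter.eventually_ge_atTop 0] with t ht
        filter_upwards [ae_restrict_mem hmeas] with x hx
        rw [Real.norm_of_nonneg (sq_nonneg _)]
        exact pow_le_pow_left₀ (hnn x hx t ht) ((hxU x hx t ht).trans (hM' t ht)) 2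
      · have : IntegrableOn (fun _ : EuclideanSpace ℝ (Fin n) => C ^ 2) Ω volume := by
          simp [integrableOn_const_iff, hΩvol]
        exact this
      · have hae : ∀ᵐ x ∂(volume.restrict Ω), x ∉ {y ∈ Ω | ∀ x ∈ Ω, u₀ x ≤ u₀ y} :=
          ae_restrict_of_ae (measure_eq_zero_iff_ae_notMem.1 hstar_null)
        filter_upwards [ae_restrict_mem hmeas, hae] with x hx hxn
        have hlt : u₀ x < u₀ y := by
          by_contra! hc
          exact hxn ⟨hx, fun z hz => (hymax z hz).trans hc⟩
        simpa using (hdecay x hx hlt).pow 2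
    have hev := hI0.eventually (gt_mem_nhds (div_pos hlk hBpos))
    obtain ⟨t, ht, ht0⟩ := (hev.and (Filter.eventually_ge_atTop 0)).exists
    have h1 := (hinv t ht0).1
    have h2 := (hinv t ht0).2
    rw [lt_div_iff₀ hBpos] at ht
    have h3 : 0 ≤ ∫ x in Ω, (u x t) ^ 2 := integral_nonneg (fun x => sq_nonneg _)
    nlinarith [mul_le_mul_of_nonneg_right h2 h3]
  -- claim 2
  have claim2 : ∀ y ∈ Ω, ¬(∀ x ∈ Ω, u₀ x ≤ u₀ y) → ∃ C : ℝ, ∀ t : ℝ, 0 ≤ t → u y t ≤ C := by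
    intro y hy hn
    push Not at hn
    obtain ⟨x1, hx1, hlt⟩ := hn
    obtain ⟨C, hC⟩ := hmass
    have hm := pos_meas hΘopen hΩΘ hu₀cont hx1 hlt
    set A := {x ∈ Ω | u₀ y < u₀ x} with hA
    have hAfin : volume A ≠ ⊤ := by
      apply ne_top_of_le_ne_top _ (measure_mono (fun x hx => hx.1 : A ⊆ Ω))
      simp [hΩvol]
    have hAm : MeasurableSet A := by
      obtain ⟨V, hV, hVe⟩ := continuousOn_iff'.1 hu₀cont (Set.Ioi (u₀ y)) isOpen_Ioi
      have : A = V ∩ Ω := by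
        rw [← hVe]; ext x; simp [hA, and_comm]
      rw [this]
      exact hV.measurableSet.inter hmeas
    have hmr : 0 < volume.real A := ENNReal.toReal_pos hm.ne' hAfin
    refine ⟨C / volume.real A, fun t ht => ?_⟩
    rw [le_div_iff₀ hmr]
    have h1 : ∫ x in A, u y t ≤ ∫ x in A, u x t := by
      apply setIntegral_mono_on _ ((hint_u t ht).mono_set (fun x hx => hx.1)) hAm
      · intro x hx
        exact hcomp y hy x hx.1 hx.2.le t ht
      · simp [integrableOn_const_iff, hAfin.lt_top]
    have h2 : ∫ x in A, u x t ≤ ∫ x in Ω, u x t := by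
      apply setIntegral_mono_set (hint_u t ht)
      · filter_upwards [ae_restrict_mem hmeas] with x hx using hnn x hx t ht
      · exact Filter.Eventually.of_forall (fun x hx => hx.1)
    have h3 : ∫ x in A, u y t = u y t * volume.real A := by
      simp [mul_comm]
    linarith [hC t ht]
  refine ⟨claim1, claim2, ?_⟩
  -- claim 3
  intro ε hε
  by_contra! hξε
  set δ := (a - d) / 2 with hδ
  have hδpos : 0 < δ := by rw [hδ]; linarith
  set K := (d + δ) / (δ * ε) with hK
  have hKpos : 0 < K := by positivity
  have hKδ : ∀ s z, 0 ≤ s → K ≤ z → δ ≤ a * z * ξ s / (1 + z * ξ s) - d := by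
    intro s z hs hz
    have h1 := hξpos s hs
    have h0 : 0 < z := lt_of_lt_of_le hKpos hz
    have h2 : K * ε ≤ z * ξ s := mul_le_mul hz (hξε s hs) hε.le h0.le
    have h3 : K * ε * δ = d + δ := by rw [hK]; field_simp
    have h4 : 0 < 1 + z * ξ s := by positivity
    have h5 : δ + d ≤ a * z * ξ s / (1 + z * ξ s) := by
      rw [le_div_iff₀ h4]
      have : a = 2 * δ + d := by rw [hδ]; ring
      rw [this]
      nlinarith [mul_le_mul_of_nonneg_right h2 hδpos.le]
    linarith
  obtain ⟨t0, ht0, hbig⟩ := claim1 y0 hy0 hy0max K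
  have hm := pos_meas hΘopen hΩΘ (hucont t0 ht0) hy0 hbig
  obtain ⟨x, ⟨hx, hxK⟩, hxn⟩ : ∃ x ∈ {x ∈ Ω | K < u x t0}, x ∉ {y ∈ Ω | ∀ x ∈ Ω, u₀ x ≤ u₀ y} := by
    by_contra! hc
    exact absurd (measure_mono_null hc hstar_null) hm.ne'
  obtain ⟨C, hC⟩ := claim2 x hx (fun h => hxn ⟨hx, h⟩)
  have hux := hucont_t x hx
  have hstay : ∀ t, t0 ≤ t → K ≤ u x t := by
    intro t ht
    obtain ⟨E, hE, hle⟩ := lin_ineq (t0 := t0) (D := fun s => u x s - K)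
      (D' := fun s => (a * u x s * ξ s / (1 + u x s * ξ s) - d) * u x s)
      (h := fun s => a * ξ s * (u x s + K + ξ s * u x s * K) /
        ((1 + u x s * ξ s) * (1 + K * ξ s)) - d)
      (fun s hs => (hsol.deriv_u x hx s (ht0.trans hs)).sub_const _)
      (by
        have hne : ∀ s ∈ Set.Ici t0, (1 + u x s * ξ s) * (1 + K * ξ s) ≠ 0 := by
          intro s hs
          have h1 := hden x hx s (ht0.trans hs)
          have h2 := hξpos s (ht0.trans hs)
          positivity
        have hux' := hux.mono (Set.Ici_subset_Ici.2 ht0)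
        have hξc' := hξc.mono (Set.Ici_subset_Ici.2 ht0)
        fun_prop (disch := assumption))
      (fun s hs => by
        have hs0 := ht0.trans hs
        have h1 := diff_id (a := a) (d := d) (hnn x hx s hs0) hKpos.le (hξpos s hs0).le
        have h2 := hKδ s K hs0 le_rfl
        have h3 : 0 ≤ (a * K * ξ s / (1 + K * ξ s) - d) * K :=
          mul_nonneg (by linarith) hKpos.le
        linarith) ht
    have : 0 ≤ (u x t0 - K) * E := mul_nonneg (by linarith) hE.le
    linarith
  have hgrow : ∀ t, t0 ≤ t → u x t0 - δ * K * t0 ≤ u x t - δ * K * t := by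
    intro t ht
    exact mono_Ici (F := fun s => u x s - δ * K * s) (t0 := t0) (t := t)
      (fun s hs _ => (hsol.deriv_u x hx s (ht0.trans hs)).sub
        ((hasDerivAt_id s).const_mul (δ * K)))
      (fun s hs _ => by
        have h1 := hstay s hs.le
        have h2 := hKδ s _ (ht0.trans hs.le) h1
        have h3 := mul_le_mul h2 h1 hKpos.le (hδpos.le.trans h2)
        linarith) ht
  have hδK : 0 < δ * K := by positivity
  have hCK : 0 ≤ C / (δ * K) := by
    have := (hnn x hx t0 ht0).trans (hC t0 ht0)
    positivity
  have h1 := hgrow (t0 + C / (δ * K)) (by linarith)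
  have h2 := hC (t0 + C / (δ * K)) (by linarith)
  have h3 : δ * K * (C / (δ * K)) = C := by field_simp
  have h4 : K ≤ u x t0 := hxK.le
  rw [mul_add, h3] at h1
  linarith
end
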